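/- For every real s > 1, the function f(λ) = (1/(ζ(s)Γ(s))) ∫₀^∞ (ln(y+1))^(s-1) / (y+1) · e^{-λ y} dy is nonnegative on (0,∞) and satisfies ∫₀^∞ f(λ) dλ = 1; i.e., it is a genuine probability density function on (0,∞). -/

import Mathlib

open MeasureTheory

/-- The Riemann zeta function for real `s > 1`, defined as `∑_{x=0}^∞ (x+1)^(-s)`. -/
noncomputable def zetaS (s : ℝ) : ℝ := ∑' x : ℕ, ((x : ℝ) + 1) ^ (-s)

theorem aux_bose (s : ℝ) (hs : 1 < s) :
    HasSum (fun n : ℕ => Real.Gamma s * ((n : ℝ) + 1) ^ (-s))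
      (∫ t in Set.Ioi (0 : ℝ), t ^ (s - 1) * (1 / (Real.exp t - 1))) := by
  have key : ∀ n : ℕ, ∫ t in Set.Ioi (0 : ℝ), t ^ (s - 1) * Real.exp (-(((n : ℝ) + 1) * t))
      = Real.Gamma s * ((n : ℝ) + 1) ^ (-s) := by
    intro n
    have hn : (0 : ℝ) < (n : ℝ) + 1 := by positivity
    rw [Real.integral_rpow_mul_exp_neg_mul_Ioi (by linarith) hn, one_div,
      Real.inv_rpow hn.le, Real.rpow_neg hn.le, mul_comm]
  have hG : 0 < Real.Gamma s := Real.Gamma_pos_of_pos (by linarith)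
  have hint : ∀ n : ℕ, IntegrableOn
      (fun t : ℝ => t ^ (s - 1) * Real.exp (-(((n : ℝ) + 1) * t))) (Set.Ioi 0) := by
    intro n
    by_contra h
    have := key n
    rw [integral_undef h] at this
    have : 0 < Real.Gamma s * ((n : ℝ) + 1) ^ (-s) := by positivity
    linarith
  have hsum : Summable (fun n : ℕ => Real.Gamma s * ((n : ℝ) + 1) ^ (-s)) := by
    apply Summable.mul_left
    have := (summable_nat_add_iff 1).2 (Real.summable_nat_rpow.2 (show -s < -1 by linarith))
    simpa using this
  have hnorm : ∀ n : ℕ, ∫ t in Set.Ioi (0 : ℝ), ‖t ^ (s - 1) * Real.exp (-(((n : ℝ) + 1) * t))‖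
      = Real.Gamma s * ((n : ℝ) + 1) ^ (-s) := by
    intro n
    rw [← key n]
    refine setIntegral_congr_fun measurableSet_Ioi fun t ht => ?_
    have ht : 0 < t := ht
    exact Real.norm_of_nonneg (by positivity)
  have := hasSum_integral_of_summable_integral_norm (μ := volume.restrict (Set.Ioi (0:ℝ)))
    hint (by simpa only [hnorm] using hsum)
  simp only [key] at this
  suffices he : (∫ t in Set.Ioi (0 : ℝ), t ^ (s - 1) * (1 / (Real.exp t - 1))) =
      ∫ t in Set.Ioi (0 : ℝ), ∑' i : ℕ, t ^ (s - 1) * Real.exp (-(((i : ℝ) + 1) * t)) by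
    rw [he]; exact this
  refine setIntegral_congr_fun (X := ℝ) measurableSet_Ioi fun t ht => ?_
  have ht : 0 < t := ht
  have h1 : Real.exp (-t) < 1 := by simpa using ht
  have h2 := (hasSum_geometric_of_lt_one (Real.exp_pos (-t)).le h1).mul_left
    (t ^ (s - 1) * Real.exp (-t))
  have h3 : 1 < Real.exp t := by simpa using ht
  have h4 : ∀ n : ℕ, t ^ (s - 1) * Real.exp (-(((n : ℝ) + 1) * t)) =
      t ^ (s - 1) * Real.exp (-t) * Real.exp (-t) ^ n := by
    intro n
    rw [← Real.exp_nat_mul, mul_assoc, ← Real.exp_add]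
    ring_nf
  simp only [h4]
  rw [h2.tsum_eq, Real.exp_neg]
  have : Real.exp t - 1 ≠ 0 := by linarith
  have h5 : 1 - (Real.exp t)⁻¹ ≠ 0 := by
    rw [← Real.exp_neg]; linarith
  field_simp

theorem aux_pos (s : ℝ) (hs : 1 < s) : 0 < zetaS s := by
  have hsum : Summable (fun n : ℕ => ((n : ℝ) + 1) ^ (-s)) := by
    have := (summable_nat_add_iff 1).2 (Real.summable_nat_rpow.2 (show -s < -1 by linarith))
    simpa using this
  exact hsum.tsum_pos (fun n => by positivity) 0 (by positivity)

theorem aux_y (s : ℝ) (hs : 1 < s) :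
    ∫ y in Set.Ioi (0 : ℝ), (Real.log (y + 1)) ^ (s - 1) / (y + 1) * (1 / y)
      = zetaS s * Real.Gamma s := by
  have h := (aux_bose s hs).tsum_eq
  rw [tsum_mul_left] at h
  rw [zetaS, mul_comm, h]
  have him : (fun t : ℝ => Real.exp t - 1) '' Set.Ioi 0 = Set.Ioi 0 := by
    ext y
    simp only [Set.mem_image, Set.mem_Ioi]
    constructor
    · rintro ⟨t, ht, rfl⟩
      have : 1 < Real.exp t := by simpa using ht
      linarith
    · intro hy
      refine ⟨Real.log (y + 1), Real.log_pos (by linarith), ?_⟩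
      rw [Real.exp_log (by linarith)]; ring
  have hc := integral_image_eq_integral_abs_deriv_smul (s := Set.Ioi (0:ℝ))
    (f := fun t : ℝ => Real.exp t - 1) (f' := Real.exp) measurableSet_Ioi
    (fun t _ => ((Real.hasDerivAt_exp t).sub_const 1).hasDerivWithinAt)
    (fun a _ b _ hab => by simpa using hab)
    (fun y => (Real.log (y + 1)) ^ (s - 1) / (y + 1) * (1 / y))
  rw [him] at hc
  rw [hc]
  refine setIntegral_congr_fun measurableSet_Ioi fun t ht => ?_
  simp only [sub_add_cancel, Real.log_exp, smul_eq_mul, abs_of_pos (Real.exp_pos t)]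
  field_simp

theorem aux_exp (y : ℝ) (hy : 0 < y) :
    IntegrableOn (fun l : ℝ => Real.exp (-l * y)) (Set.Ioi 0) ∧
    ∫ l in Set.Ioi (0 : ℝ), Real.exp (-l * y) = 1 / y := by
  have h1 := integrableOn_exp_mul_Ioi (a := -y) (by linarith) 0
  have h2 := integral_exp_mul_Ioi (a := -y) (by linarith) 0
  have e : ∀ l : ℝ, -l * y = -y * l := fun l => by ring
  simp only [e]
  exact ⟨h1, by rw [h2]; simp⟩

/-- The Poisson mixing density
`f(λ) = (1/(ζ(s)Γ(s))) ∫₀^∞ (ln(y+1))^(s-1)/(y+1) e^{-λy} dy`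
is a genuine probability density on `(0,∞)`. -/
theorem poisson_mixing_density_is_pdf (s : ℝ) (hs : 1 < s) :
    (∀ lam ∈ Set.Ioi (0 : ℝ),
        0 ≤ (1 / (zetaS s * Real.Gamma s)) *
          ∫ y in Set.Ioi (0 : ℝ),
            (Real.log (y + 1)) ^ (s - 1) / (y + 1) * Real.exp (-lam * y)) ∧
    ∫ lam in Set.Ioi (0 : ℝ),
        (1 / (zetaS s * Real.Gamma s)) *
          ∫ y in Set.Ioi (0 : ℝ),
            (Real.log (y + 1)) ^ (s - 1) / (y + 1) * Real.exp (-lam * y)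
      = 1 := by
  have hG : 0 < Real.Gamma s := Real.Gamma_pos_of_pos (by linarith)
  have hZ := aux_pos s hs
  have hnn : ∀ y ∈ Set.Ioi (0:ℝ), 0 ≤ (Real.log (y + 1)) ^ (s - 1) / (y + 1) := by
    intro y hy
    have hy : 0 < y := hy
    have : 0 ≤ Real.log (y + 1) := Real.log_nonneg (by linarith)
    positivity
  refine ⟨fun lam _ => mul_nonneg (by positivity)
    (setIntegral_nonneg measurableSet_Ioi fun y hy => mul_nonneg (hnn y hy) (Real.exp_pos _).le), ?_⟩
  have hy := aux_y s hs
  have hyint : IntegrableOn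
      (fun y : ℝ => (Real.log (y + 1)) ^ (s - 1) / (y + 1) * (1 / y)) (Set.Ioi 0) := by
    by_contra h
    rw [integral_undef h] at hy
    have := mul_pos hZ hG
    linarith
  have hprod : Integrable (Function.uncurry fun (l y : ℝ) =>
      (Real.log (y + 1)) ^ (s - 1) / (y + 1) * Real.exp (-l * y))
      ((volume.restrict (Set.Ioi (0:ℝ))).prod (volume.restrict (Set.Ioi (0:ℝ)))) := by
    rw [integrable_prod_iff']
    · constructor
      · filter_upwards [ae_restrict_mem measurableSet_Ioi] with y hy
        exact (aux_exp y hy).1.const_mul ((Real.log (y + 1)) ^ (s - 1) / (y + 1))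
      · refine hyint.congr ?_
        filter_upwards [ae_restrict_mem measurableSet_Ioi] with y hy
        rw [← (aux_exp y hy).2, ← integral_const_mul]
        refine integral_congr_ae (Filter.Eventually.of_forall fun l => ?_)
        exact (Real.norm_of_nonneg (mul_nonneg (hnn y hy) (Real.exp_pos _).le)).symm
    · apply Measurable.aestronglyMeasurable
      unfold Function.uncurry
      fun_prop
  rw [integral_const_mul, integral_integral_swap hprod]
  have : ∫ y in Set.Ioi (0 : ℝ), ∫ l in Set.Ioi (0 : ℝ),
      (Real.log (y + 1)) ^ (s - 1) / (y + 1) * Real.exp (-l * y) = zetaS s * Real.Gamma s := by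
    rw [← hy]
    refine setIntegral_congr_fun measurableSet_Ioi fun y hy => ?_
    rw [integral_const_mul, (aux_exp y hy).2]
  rw [this]
  field_simp
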